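/- arXiv:2405.19317 — 6 statements merged into one kernel-verified Lean document; each statement's English description precedes it below -/
import Mathlib

section
/- Let K ≥ 2 be an integer, let ã ∈ {1,…,K} be a distinguished index, let μ : {1,…,K} → ℝ satisfy μ_ã > μ_a for every a ≠ ã, and let σ_a > 0 and w_a > 0 for every a ∈ {1,…,K}. Then the infimum, over all ν : {1,…,K} → ℝ such that there exists b ≠ ã with ν_b ≥ ν_ã, of Σ_{a=1}^{K} w_a(μ_a − ν_a)²/(2σ_a²), equals min_{a ≠ ã} (μ_ã − μ_a)²/(2(σ_ã²/w_ã + σ_a²/w_a)), and this infimum is attained. -/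
/-! Let `a` be the best arm. The alternatives are the union over `b ≠ a` of the half-spaces
`ν a ≤ ν b`, so the overall minimum is the least of finitely many pairwise minima. For a fixed `b`,
a cheapest change of means moves those of `a` and `b` to their average weighted by inverse variances
and leaves every other mean alone; that no change is cheaper is Sedrakyan's inequality for the two
displacements. -/

theorem isLeast_iUnion_ciInf {ι α : Type*} [Finite ι] [Nonempty ι]
    [ConditionallyCompleteLinearOrder α] {s : ι → Set α} {m : ι → α}
    (h : ∀ i, IsLeast (s i) (m i)) : IsLeast (⋃ i, s i) (⨅ i, m i) := by
  obtain ⟨i, hi⟩ := exists_eq_ciInf_of_finite (f := m)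
  refine ⟨Set.mem_iUnion_of_mem i (hi ▸ (h i).1), ?_⟩
  exact ((isGLB_iUnion_iff_of_isGLB (fun j => (h j).isGLB) _).1
    (isGLB_ciInf (Set.finite_range m).bddBelow)).1

theorem setOf_exists_exists_eq_iUnion_image {ι α β : Type*} (f : α → β) (p : ι → Prop)
    (r : ι → α → Prop) :
    {y | ∃ x, (∃ i, p i ∧ r i x) ∧ y = f x} = ⋃ i : {i // p i}, f '' {x | r i x} := by
  ext y
  simp only [Set.mem_ofPred_eq, Set.mem_iUnion, Set.mem_image, Subtype.exists]
  grind

section TransportCost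

variable {ι 𝕜 : Type*} [Field 𝕜]

/-- The quadratic cost of moving the mean vector `μ` to `ν`, arm `a` having variance `v a`. For
Gaussian arms with standard deviations `σ` sampled in proportions `w`, one takes
`v a = σ a ^ 2 / w a`, the sampling effort being absorbed into the variance. -/
def transportCost [Fintype ι] (v μ ν : ι → 𝕜) : 𝕜 :=
  ∑ a, (μ a - ν a) ^ 2 / (2 * v a)

theorem sum_weighted_sq_eq_transportCost [Fintype ι] (μ ν σ w : ι → 𝕜) :
    ∑ a, w a * (μ a - ν a) ^ 2 / (2 * σ a ^ 2) = transportCost (fun a => σ a ^ 2 / w a) μ ν :=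
  Finset.sum_congr rfl fun a _ => by
    rw [← mul_div_assoc, div_div_eq_mul_div, mul_comm (w a)]

/-- The average of `x` and `y` weighted by the inverses of their variances `p` and `q`, written
without inverses. It is the common value to which two means are moved at least cost. -/
def pooledMean (p q x y : 𝕜) : 𝕜 :=
  (q * x + p * y) / (p + q)

open scoped Classical in
/-- The mean vector obtained from `μ` by moving the means of `a` and `b` to their pooled mean. -/
noncomputable def poolArms (v μ : ι → 𝕜) (a b : ι) : ι → 𝕜 :=
  fun i => if i = a ∨ i = b then pooledMean (v a) (v b) (μ a) (μ b) else μ i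

theorem poolArms_left (v μ : ι → 𝕜) (a b : ι) :
    poolArms v μ a b a = pooledMean (v a) (v b) (μ a) (μ b) :=
  if_pos (.inl rfl)

theorem poolArms_right (v μ : ι → 𝕜) (a b : ι) :
    poolArms v μ a b b = pooledMean (v a) (v b) (μ a) (μ b) :=
  if_pos (.inr rfl)

theorem poolArms_of_ne (v μ : ι → 𝕜) {a b i : ι} (hia : i ≠ a) (hib : i ≠ b) :
    poolArms v μ a b i = μ i :=
  if_neg (not_or.2 ⟨hia, hib⟩)

theorem sq_sub_pooledMean_div_add {p q : 𝕜} (hpq : p + q ≠ 0) (x y : 𝕜) :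
    (x - pooledMean p q x y) ^ 2 / (2 * p) + (y - pooledMean p q x y) ^ 2 / (2 * q) =
      (x - y) ^ 2 / (2 * (p + q)) := by
  have hx : x - pooledMean p q x y = p * (x - y) / (p + q) := by
    unfold pooledMean
    field_simp
    ring
  have hy : y - pooledMean p q x y = q * (y - x) / (p + q) := by
    unfold pooledMean
    field_simp
    ring
  rw [hx, hy]
  field_simp
  ring

theorem transportCost_poolArms [Fintype ι] {v : ι → 𝕜} (μ : ι → 𝕜) {a b : ι}
    (hvab : v a + v b ≠ 0) (hab : a ≠ b) :
    transportCost v μ (poolArms v μ a b) = (μ a - μ b) ^ 2 / (2 * (v a + v b)) := by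
  have unmoved : ∀ i, i ≠ a ∧ i ≠ b → (μ i - poolArms v μ a b i) ^ 2 / (2 * v i) = 0 := by
    rintro i ⟨hia, hib⟩
    simp [poolArms_of_ne v μ hia hib]
  rw [transportCost, Fintype.sum_eq_add a b hab unmoved, poolArms_left, poolArms_right,
    sq_sub_pooledMean_div_add hvab]

variable [LinearOrder 𝕜] [IsStrictOrderedRing 𝕜]

theorem sq_sub_div_add_le {p q : 𝕜} (hp : 0 < p) (hq : 0 < q) (x y : 𝕜) :
    (x - y) ^ 2 / (p + q) ≤ x ^ 2 / p + y ^ 2 / q := by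
  simpa [Fin.sum_univ_two, sub_eq_add_neg] using
    Finset.univ.sq_sum_div_le_sum_sq_div ![x, -y] (g := ![p, q]) (by simp [hp, hq])

variable [Fintype ι] {v μ ν : ι → 𝕜} {a b : ι}

theorem sq_sub_div_le_transportCost (hv : ∀ i, 0 < v i) (hab : a ≠ b) (hμ : μ b ≤ μ a)
    (hν : ν a ≤ ν b) : (μ a - μ b) ^ 2 / (2 * (v a + v b)) ≤ transportCost v μ ν := by
  have hva := hv a
  have hvb := hv b
  have : 0 ≤ μ a - μ b := sub_nonneg.2 hμ
  have gap_le : μ a - μ b ≤ (μ a - ν a) - (μ b - ν b) := by linarith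
  calc
    (μ a - μ b) ^ 2 / (2 * (v a + v b))
        ≤ ((μ a - ν a) - (μ b - ν b)) ^ 2 / (2 * v a + 2 * v b) := by
      rw [← mul_add]
      gcongr
    _ ≤ (μ a - ν a) ^ 2 / (2 * v a) + (μ b - ν b) ^ 2 / (2 * v b) :=
      sq_sub_div_add_le (by positivity) (by positivity) _ _
    _ ≤ transportCost v μ ν :=
      Finset.add_le_sum (f := fun i => (μ i - ν i) ^ 2 / (2 * v i))
        (fun i _ => div_nonneg (sq_nonneg _) (mul_nonneg zero_le_two (hv i).le))
        (Finset.mem_univ a) (Finset.mem_univ b) hab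

theorem isLeast_transportCost_image (hv : ∀ i, 0 < v i) (hab : a ≠ b) (hμ : μ b ≤ μ a) :
    IsLeast (transportCost v μ '' {ν | ν a ≤ ν b}) ((μ a - μ b) ^ 2 / (2 * (v a + v b))) := by
  have hvab : v a + v b ≠ 0 := (add_pos (hv a) (hv b)).ne'
  refine ⟨⟨poolArms v μ a b, ?_, transportCost_poolArms μ hvab hab⟩, ?_⟩
  · exact ((poolArms_left v μ a b).trans (poolArms_right v μ a b).symm).le
  · rintro _ ⟨ν, hν, rfl⟩
    exact sq_sub_div_le_transportCost hv hab hμ hν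

end TransportCost

theorem stmt1_general {ι : Type*} [Fintype ι] [Nontrivial ι] (best : ι) (μ σ w : ι → ℝ)
    (hμ : ∀ a, a ≠ best → μ a ≤ μ best) (hσ : ∀ a, σ a ≠ 0) (hw : ∀ a, 0 < w a) :
    IsLeast
      {x : ℝ | ∃ ν : ι → ℝ, (∃ b, b ≠ best ∧ ν best ≤ ν b) ∧
        x = ∑ a, w a * (μ a - ν a) ^ 2 / (2 * σ a ^ 2)}
      (⨅ a : {a // a ≠ best},
        (μ best - μ a) ^ 2 / (2 * (σ best ^ 2 / w best + σ a ^ 2 / w a))) := by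
  have hv : ∀ a, 0 < σ a ^ 2 / w a := fun a => div_pos (sq_pos_of_ne_zero (hσ a)) (hw a)
  have nonempty_subopt : Nonempty {a // a ≠ best} := nonempty_subtype.2 (exists_ne best)
  simp_rw [sum_weighted_sq_eq_transportCost]
  rw [setOf_exists_exists_eq_iUnion_image]
  exact isLeast_iUnion_ciInf fun b => isLeast_transportCost_image hv b.2.symm (hμ b b.2)

/-- The infimum over alternative mean vectors `ν` whose best arm is not `atil`
of `Σ_a w_a (μ_a − ν_a)²/(2σ_a²)` equals
`min_{a ≠ atil} (μ_atil − μ_a)²/(2(σ_atil²/w_atil + σ_a²/w_a))`, and it is attained. -/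
theorem stmt1 {K : ℕ} (hK : 2 ≤ K) (atil : Fin K) (μ σ w : Fin K → ℝ)
    (hμ : ∀ a : Fin K, a ≠ atil → μ a < μ atil)
    (hσ : ∀ a, 0 < σ a) (hw : ∀ a, 0 < w a) :
    IsLeast
      { x : ℝ | ∃ ν : Fin K → ℝ, (∃ b : Fin K, b ≠ atil ∧ ν atil ≤ ν b) ∧
          x = ∑ a, w a * (μ a - ν a) ^ 2 / (2 * (σ a) ^ 2) }
      (⨅ a : {a : Fin K // a ≠ atil},
        (μ atil - μ (a : Fin K)) ^ 2 /
          (2 * ((σ atil) ^ 2 / w atil + (σ (a : Fin K)) ^ 2 / w (a : Fin K)))) := by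
  have : Nontrivial (Fin K) := Fin.nontrivial_iff_two_le.2 hK
  exact stmt1_general atil μ σ w (fun a ha => (hμ a ha).le) (fun a => (hσ a).ne') hw
end

section
/- Let K ≥ 2 be an integer, ã ∈ {1,…,K}, and σ_a > 0 for all a ∈ {1,…,K}; set S = sqrt(Σ_{b≠ã} σ_b²) and define the GNA weights by w^GNA_ã = σ_ã/(σ_ã + S) and w^GNA_a = σ_a²/(S(σ_ã + S)) for a ≠ ã. Then every w^GNA_a is strictly positive, Σ_{a=1}^{K} w^GNA_a = 1, and for every a ≠ ã one has σ_ã²/w^GNA_ã + σ_a²/w^GNA_a = (σ_ã + S)². -/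
/-!
Dividing `σ_ã²` by its weight gives `σ_ã (σ_ã + S)`, and dividing `σ_a²` by its weight gives
`S (σ_ã + S)` whatever `a ≠ ã` is; the two quotients add up to `(σ_ã + S)²`. Only the
normalization depends on the value of `S`: the weights other than that of `ã` have total
`S² / (S (σ_ã + S)) = S / (σ_ã + S)`, which complements `σ_ã / (σ_ã + S)`.
-/

section GNAWeight

variable {ι 𝕜 : Type*} [DecidableEq ι] [Field 𝕜] {σ : ι → 𝕜} {i j : ι} {S : 𝕜}

/-- The Generalized Neyman Allocation weight of `j`, where `i` is the distinguished index `ã` and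
`σ` the family of standard deviations. The scale `S`, in the paper the square root of
`∑ b ≠ i, σ b ^ 2`, is a free parameter, which avoids square roots in `𝕜` and allows an infinite
index set. -/
def gnaWeight (σ : ι → 𝕜) (i : ι) (S : 𝕜) (j : ι) : 𝕜 :=
  if j = i then σ i / (σ i + S) else σ j ^ 2 / (S * (σ i + S))

theorem gnaWeight_self : gnaWeight σ i S i = σ i / (σ i + S) :=
  if_pos rfl

theorem gnaWeight_of_ne (hj : j ≠ i) : gnaWeight σ i S j = σ j ^ 2 / (S * (σ i + S)) :=
  if_neg hj

theorem sq_div_gnaWeight_self : σ i ^ 2 / gnaWeight σ i S i = σ i * (σ i + S) := by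
  rw [gnaWeight_self]
  field_simp

theorem sq_div_gnaWeight_of_ne (hj : j ≠ i) (hσj : σ j ≠ 0) :
    σ j ^ 2 / gnaWeight σ i S j = S * (σ i + S) := by
  rw [gnaWeight_of_ne hj, div_div_cancel₀ (pow_ne_zero 2 hσj)]

theorem sq_div_gnaWeight_self_add_sq_div_gnaWeight (hj : j ≠ i) (hσj : σ j ≠ 0) :
    σ i ^ 2 / gnaWeight σ i S i + σ j ^ 2 / gnaWeight σ i S j = (σ i + S) ^ 2 := by
  rw [sq_div_gnaWeight_self, sq_div_gnaWeight_of_ne hj hσj, ← add_mul, sq]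

theorem gnaWeight_pos [LinearOrder 𝕜] [IsStrictOrderedRing 𝕜] (hi : 0 < σ i) (hS : 0 < S)
    (hσ : ∀ j, j ≠ i → σ j ≠ 0) (j : ι) : 0 < gnaWeight σ i S j := by
  obtain rfl | hj := eq_or_ne j i
  · rw [gnaWeight_self]
    positivity
  · have hσj : σ j ≠ 0 := hσ j hj
    rw [gnaWeight_of_ne hj]
    positivity

theorem hasSum_gnaWeight [TopologicalSpace 𝕜] [IsTopologicalRing 𝕜] (hS : S ≠ 0)
    (hiS : σ i + S ≠ 0) (hsum : HasSum (fun b : {b // b ≠ i} ↦ σ b ^ 2) (S ^ 2)) :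
    HasSum (gnaWeight σ i S) 1 := by
  have h_others : HasSum (fun b : {b // b ≠ i} ↦ gnaWeight σ i S b) (S / (σ i + S)) := by
    have h_total : S ^ 2 / (S * (σ i + S)) = S / (σ i + S) := by field_simp
    rw [← h_total, funext fun b : {b // b ≠ i} ↦ gnaWeight_of_ne b.2]
    exact hsum.div_const (S * (σ i + S))
  have h_self : HasSum (fun b : {b // b = i} ↦ gnaWeight σ i S b) (σ i / (σ i + S)) := by
    rw [← gnaWeight_self]
    exact hasSum_unique fun b : {b // b = i} ↦ gnaWeight σ i S b
  have h_one : σ i / (σ i + S) + S / (σ i + S) = 1 := by rw [← add_div, div_self hiS]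
  exact h_one ▸ HasSum.add_compl (s := {b | b = i}) h_self h_others

theorem stmt2_general [LinearOrder 𝕜] [IsStrictOrderedRing 𝕜] [TopologicalSpace 𝕜]
    [IsTopologicalRing 𝕜] (hi : 0 < σ i) (hσ : ∀ j, j ≠ i → σ j ≠ 0) (hS : 0 < S)
    (hsum : HasSum (fun b : {b // b ≠ i} ↦ σ b ^ 2) (S ^ 2)) :
    (∀ j, 0 < gnaWeight σ i S j) ∧ HasSum (gnaWeight σ i S) 1 ∧
      ∀ j, j ≠ i → σ i ^ 2 / gnaWeight σ i S i + σ j ^ 2 / gnaWeight σ i S j = (σ i + S) ^ 2 :=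
  ⟨gnaWeight_pos hi hS hσ, hasSum_gnaWeight hS.ne' (add_pos hi hS).ne' hsum,
    fun j hj ↦ sq_div_gnaWeight_self_add_sq_div_gnaWeight hj (hσ j hj)⟩

end GNAWeight

section Finite

variable {ι : Type*} [Fintype ι] [DecidableEq ι] {σ : ι → ℝ} {i : ι}

theorem sqrt_sum_erase_sq_pos [Nontrivial ι] (hσ : ∀ j, j ≠ i → σ j ≠ 0) :
    0 < √(∑ b ∈ Finset.univ.erase i, σ b ^ 2) :=
  Real.sqrt_pos.mpr <| Finset.sum_pos
    (fun b hb ↦ sq_pos_of_ne_zero (hσ b (Finset.ne_of_mem_erase hb)))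
    Finset.univ_nontrivial.erase_nonempty

theorem hasSum_sq_subtype_ne (σ : ι → ℝ) (i : ι) :
    HasSum (fun b : {b // b ≠ i} ↦ σ b ^ 2) (√(∑ b ∈ Finset.univ.erase i, σ b ^ 2) ^ 2) := by
  rw [Real.sq_sqrt (Finset.sum_nonneg fun b _ ↦ sq_nonneg (σ b)),
    Finset.sum_subtype (p := (· ≠ i)) (Finset.univ.erase i) (by simp)]
  exact hasSum_fintype _

end Finite

/-- The GNA weights are positive, sum to one, and satisfy
`σ_atil²/w_atil + σ_a²/w_a = (σ_atil + S)²` for every `a ≠ atil`,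
where `S = sqrt (Σ_{b ≠ atil} σ_b²)`. -/
theorem stmt2 {K : ℕ} (hK : 2 ≤ K) (atil : Fin K) (σ : Fin K → ℝ) (hσ : ∀ a, 0 < σ a) :
    let S : ℝ := Real.sqrt (∑ b ∈ Finset.univ.erase atil, (σ b) ^ 2)
    let w : Fin K → ℝ := fun a =>
      if a = atil then σ atil / (σ atil + S) else (σ a) ^ 2 / (S * (σ atil + S))
    (∀ a, 0 < w a) ∧ (∑ a, w a = 1) ∧
    ∀ a : Fin K, a ≠ atil → (σ atil) ^ 2 / w atil + (σ a) ^ 2 / w a = (σ atil + S) ^ 2 := by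
  intro S w
  have : Nontrivial (Fin K) := Fin.nontrivial_iff_two_le.mpr hK
  have hσ' : ∀ a, a ≠ atil → σ a ≠ 0 := fun a _ ↦ (hσ a).ne'
  obtain ⟨hw_pos, hw_sum, hw_eq⟩ := stmt2_general (hσ atil) hσ' (sqrt_sum_erase_sq_pos hσ')
    (hasSum_sq_subtype_ne σ atil)
  exact ⟨hw_pos, (hasSum_fintype w).unique hw_sum, hw_eq⟩
end

section
/- Let K ≥ 2 be an integer, ã ∈ {1,…,K}, and σ_a > 0 for all a ∈ {1,…,K}; set S = sqrt(Σ_{b≠ã} σ_b²). Then for every w : {1,…,K} → ℝ with w_a > 0 for all a and Σ_{a=1}^{K} w_a = 1, there exists a ≠ ã such that σ_ã²/w_ã + σ_a²/w_a ≥ (σ_ã + S)². -/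
/-!
Merge all arms `a ≠ i` into a single arm of weight `∑ a ≠ i, w a` and variance `S ^ 2`. Some
ratio `σ a ^ 2 / w a` is at least the merged ratio, which is the mediant of all of them, and
Sedrakyan's inequality (Cauchy–Schwarz) bounds the resulting two-arm sum from below.
-/

section OrderedSemifield

variable {ι R : Type*} [Semifield R] [LinearOrder R] [IsStrictOrderedRing R]

theorem exists_sum_div_sum_le_div {s : Finset ι} (hs : s.Nonempty) (f : ι → R) {g : ι → R}
    (hg : ∀ i ∈ s, 0 < g i) : ∃ i ∈ s, (∑ j ∈ s, f j) / ∑ j ∈ s, g j ≤ f i / g i := by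
  have hsum : 0 < ∑ j ∈ s, g j := Finset.sum_pos hg hs
  obtain ⟨i, hi, hle⟩ : ∃ i ∈ s, (∑ j ∈ s, f j) / (∑ j ∈ s, g j) * g i ≤ f i := by
    apply Finset.exists_le_of_sum_le hs
    rw [← Finset.mul_sum, div_mul_cancel₀ _ hsum.ne']
  exact ⟨i, hi, (le_div_iff₀ (hg i hi)).mpr hle⟩

theorem add_sq_div_add_le_sq_div_add_sq_div [ExistsAddOfLE R] (x y : R) {a b : R}
    (ha : 0 < a) (hb : 0 < b) :
    (x + y) ^ 2 / (a + b) ≤ x ^ 2 / a + y ^ 2 / b := by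
  simpa using Finset.sq_sum_div_le_sum_sq_div Finset.univ ![x, y] (g := ![a, b])
    (by simp [Fin.forall_fin_two, ha, hb])

end OrderedSemifield

theorem stmt4_general {ι : Type*} [Fintype ι] [DecidableEq ι] [Nontrivial ι] (i : ι) (σ : ι → ℝ)
    {w : ι → ℝ} (hw : ∀ a, 0 < w a) :
    ∃ a, a ≠ i ∧ (σ i + √(∑ b ∈ Finset.univ.erase i, σ b ^ 2)) ^ 2 / ∑ b, w b ≤
      σ i ^ 2 / w i + σ a ^ 2 / w a := by
  set s : Finset ι := Finset.univ.erase i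
  set S : ℝ := √(∑ b ∈ s, σ b ^ 2)
  have hs : s.Nonempty := Finset.univ_nontrivial.erase_nonempty
  have hS : S ^ 2 = ∑ b ∈ s, σ b ^ 2 := Real.sq_sqrt (Finset.sum_nonneg fun b _ => sq_nonneg (σ b))
  obtain ⟨a, ha, hmediant⟩ := exists_sum_div_sum_le_div hs (fun b => σ b ^ 2) fun b _ => hw b
  refine ⟨a, Finset.ne_of_mem_erase ha, ?_⟩
  calc (σ i + S) ^ 2 / ∑ b, w b
      = (σ i + S) ^ 2 / (w i + ∑ b ∈ s, w b) := by
        rw [Finset.add_sum_erase _ _ (Finset.mem_univ i)]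
    _ ≤ σ i ^ 2 / w i + S ^ 2 / ∑ b ∈ s, w b :=
        add_sq_div_add_le_sq_div_add_sq_div _ _ (hw i) (Finset.sum_pos (fun b _ => hw b) hs)
    _ ≤ σ i ^ 2 / w i + σ a ^ 2 / w a := by
        rw [hS]
        gcongr

/-- For every point `w` of the open probability simplex there is an arm
`a ≠ atil` with `σ_atil²/w_atil + σ_a²/w_a ≥ (σ_atil + S)²`,
where `S = sqrt (Σ_{b ≠ atil} σ_b²)`. -/
theorem stmt4 {K : ℕ} (hK : 2 ≤ K) (atil : Fin K) (σ : Fin K → ℝ) (hσ : ∀ a, 0 < σ a) :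
    let S : ℝ := Real.sqrt (∑ b ∈ Finset.univ.erase atil, (σ b) ^ 2)
    ∀ w : Fin K → ℝ, (∀ a, 0 < w a) → (∑ a, w a = 1) →
      ∃ a : Fin K, a ≠ atil ∧ (σ atil + S) ^ 2 ≤ (σ atil) ^ 2 / w atil + (σ a) ^ 2 / w a := by
  intro _ w hw hsum
  have : Nontrivial (Fin K) := Fin.nontrivial_iff_two_le.mpr hK
  simpa only [hsum, div_one] using stmt4_general atil σ hw
end

section
/- Let (Ω, F, P) be a probability space, G ⊆ F a sub-σ-algebra, A ∈ F an event, and Y : Ω → ℝ an integrable random variable with 1_A·Y integrable. Let w be a G-measurable random variable with w ≥ δ almost surely for some constant δ > 0, let μ̂ be a bounded G-measurable random variable, and let μ ∈ ℝ be a constant. Assume E[1_A | G] = w almost surely and E[1_A·Y | G] = w·μ almost surely. Then E[ 1_A·(Y − μ̂)/w + μ̂ | G ] = μ almost surely. -/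
open MeasureTheory

/-!
Both conditional moment assumptions combine to `E[1_A (Y - μ̂) | G] = w (μ - μ̂)`, because `μ̂` is
`G`-measurable. Hence the inverse-probability-weighted residual `1_A (Y - μ̂) / w` has conditional
mean `μ - μ̂`, exactly the bias that adding `μ̂` back removes.
-/

section

variable {Ω E : Type*} {m m0 : MeasurableSpace Ω} {P : Measure Ω} [NormedAddCommGroup E]

lemma integrable_inv_smul_of_le_norm {𝕜 : Type*} [NormedField 𝕜] [NormedSpace 𝕜 E]
    {w : Ω → 𝕜} {X : Ω → E} {δ : ℝ}
    (hw : AEStronglyMeasurable w P) (hδ : 0 < δ) (hwδ : ∀ᵐ ω ∂P, δ ≤ ‖w ω‖)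
    (hX : Integrable X P) : Integrable (w⁻¹ • X) P := by
  refine hX.bdd_smul δ⁻¹ hw.inv₀ ?_
  filter_upwards [hwδ] with ω hω
  simpa only [Pi.inv_apply, norm_inv] using inv_anti₀ hδ hω

variable [NormedSpace ℝ E] [CompleteSpace E]

lemma condExp_smul_sub_of_aestronglyMeasurable {Z : Ω → ℝ} {Y g : Ω → E}
    (hZ : Integrable Z P) (hZY : Integrable (Z • Y) P) (hZg : Integrable (Z • g) P)
    (hg : AEStronglyMeasurable[m] g P) :
    P[Z • (Y - g) | m] =ᵐ[P] P[Z • Y | m] - P[Z | m] • g := by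
  rw [smul_sub]
  exact (condExp_sub hZY hZg m).trans
    (Filter.EventuallyEq.rfl.sub (condExp_smul_of_aestronglyMeasurable_right hZ hZg hg))

lemma condExp_inv_smul_of_condExp_ae_eq_smul {w : Ω → ℝ} {X ν : Ω → E}
    (hw : AEStronglyMeasurable[m] w P) (hw0 : ∀ᵐ ω ∂P, w ω ≠ 0) (hX : Integrable X P)
    (hwX : Integrable (w⁻¹ • X) P) (hcond : P[X | m] =ᵐ[P] w • ν) :
    P[w⁻¹ • X | m] =ᵐ[P] ν := by
  have hw_inv : AEStronglyMeasurable[m] w⁻¹ P := hw.inv₀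
  filter_upwards [condExp_smul_of_aestronglyMeasurable_left hw_inv hwX hX, hcond, hw0]
    with ω hpull hω hne
  rw [hpull, Pi.smul_apply', hω, Pi.smul_apply', Pi.inv_apply, inv_smul_smul₀ hne]

lemma condExp_add_of_aestronglyMeasurable_right (hm : m ≤ m0) [SigmaFinite (P.trim hm)]
    {f g : Ω → E} (hf : Integrable f P) (hg : Integrable g P)
    (hgm : AEStronglyMeasurable[m] g P) :
    P[f + g | m] =ᵐ[P] P[f | m] + g :=
  (condExp_add hf hg m).trans
    (Filter.EventuallyEq.rfl.add (condExp_of_aestronglyMeasurable' hm hgm hg))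

theorem stmt14_general (hm : m ≤ m0) [SigmaFinite (P.trim hm)]
    {Z w : Ω → ℝ} {Y μhat ν : Ω → E}
    (hZ : Integrable Z P) (hZY : Integrable (Z • Y) P) (hZμhat : Integrable (Z • μhat) P)
    (hμhat : Integrable μhat P) (hμhatm : AEStronglyMeasurable[m] μhat P)
    (hw0 : ∀ᵐ ω ∂P, w ω ≠ 0) (hres : Integrable (w⁻¹ • Z • (Y - μhat)) P)
    (hcondZ : P[Z | m] =ᵐ[P] w) (hcondZY : P[Z • Y | m] =ᵐ[P] w • ν) :
    P[w⁻¹ • Z • (Y - μhat) + μhat | m] =ᵐ[P] ν := by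
  have hw : AEStronglyMeasurable[m] w P :=
    stronglyMeasurable_condExp.aestronglyMeasurable.congr hcondZ
  have hres_int : Integrable (Z • (Y - μhat)) P := by
    simpa only [smul_sub] using hZY.sub hZμhat
  have hres_cond : P[Z • (Y - μhat) | m] =ᵐ[P] w • (ν - μhat) := calc
    P[Z • (Y - μhat) | m]
      =ᵐ[P] P[Z • Y | m] - P[Z | m] • μhat :=
        condExp_smul_sub_of_aestronglyMeasurable hZ hZY hZμhat hμhatm
    _ =ᵐ[P] w • ν - w • μhat := hcondZY.sub (hcondZ.smul .rfl)
    _ = w • (ν - μhat) := (smul_sub w ν μhat).symm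
  calc
    P[w⁻¹ • Z • (Y - μhat) + μhat | m]
      =ᵐ[P] P[w⁻¹ • Z • (Y - μhat) | m] + μhat :=
        condExp_add_of_aestronglyMeasurable_right hm hres hμhat hμhatm
    _ =ᵐ[P] (ν - μhat) + μhat :=
        (condExp_inv_smul_of_condExp_ae_eq_smul hw hw0 hres_int hres hres_cond).add .rfl
    _ = ν := sub_add_cancel ν μhat

end

/-- Conditional unbiasedness of the A2IPW summand: if
`E[1_A | G] = w` and `E[1_A·Y | G] = w·μ` a.s., with `w` `G`-measurable and bounded below by
`δ > 0`, and `μ̂` a bounded `G`-measurable plug-in, then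
`E[1_A (Y − μ̂)/w + μ̂ | G] = μ` a.s. -/
theorem stmt14 {Ω : Type*} {m m0 : MeasurableSpace Ω} (hm : m ≤ m0)
    (P : Measure Ω) [IsProbabilityMeasure P]
    (A : Set Ω) (hA : MeasurableSet[m0] A)
    (Y : Ω → ℝ) (hYint : Integrable Y P)
    (hAYint : Integrable (fun ω => A.indicator (fun _ => (1 : ℝ)) ω * Y ω) P)
    (w : Ω → ℝ) (hw : Measurable[m] w)
    (δ : ℝ) (hδ : 0 < δ) (hwδ : ∀ᵐ ω ∂P, δ ≤ w ω)
    (μhat : Ω → ℝ) (hμhat : Measurable[m] μhat)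
    (Cμ : ℝ) (hμhatbdd : ∀ ω, |μhat ω| ≤ Cμ)
    (μc : ℝ)
    (hcond1 : P[A.indicator (fun _ => (1 : ℝ)) | m] =ᵐ[P] w)
    (hcond2 : P[fun ω => A.indicator (fun _ => (1 : ℝ)) ω * Y ω | m]
      =ᵐ[P] fun ω => w ω * μc) :
    P[fun ω => A.indicator (fun _ => (1 : ℝ)) ω * (Y ω - μhat ω) / w ω + μhat ω | m]
      =ᵐ[P] fun _ => μc := by
  have hμhatm : StronglyMeasurable[m] μhat := hμhat.stronglyMeasurable
  have hμhat_int : Integrable μhat P :=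
    .of_bound (hμhatm.mono hm).aestronglyMeasurable Cμ (ae_of_all _ hμhatbdd)
  have hA_int : Integrable (A.indicator fun _ => (1 : ℝ)) P := (integrable_const 1).indicator hA
  have hAμhat_int : Integrable ((A.indicator fun _ => (1 : ℝ)) • μhat) P :=
    hA_int.smul_bdd Cμ hμhat_int.aestronglyMeasurable (ae_of_all _ hμhatbdd)
  have hres_int : Integrable (w⁻¹ • (A.indicator fun _ => (1 : ℝ)) • (Y - μhat)) P :=
    integrable_inv_smul_of_le_norm (hw.mono hm le_rfl).aestronglyMeasurable hδ
      (hwδ.mono fun _ h => h.trans (le_abs_self _))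
      (by simpa only [smul_sub] using! hAYint.sub hAμhat_int)
  convert stmt14_general hm hA_int hAYint hAμhat_int hμhat_int hμhatm.aestronglyMeasurable
    (hwδ.mono fun _ h => (hδ.trans_le h).ne') hres_int hcond1 hcond2 using 3 with ω
  exact congrArg (· + μhat ω) (div_eq_inv_mul _ _)
end

section
/- Let (Ω, F, P) be a probability space, G ⊆ F a sub-σ-algebra, A ∈ F an event, and Y : Ω → ℝ a random variable with 1_A·Y and 1_A·Y² integrable. Let w be a G-measurable random variable with w ≥ δ almost surely for some constant δ > 0, let μ̂ be a bounded G-measurable random variable, and let μ, σ ∈ ℝ be constants. Assume that almost surely E[1_A | G] = w, E[1_A·Y | G] = w·μ, and E[1_A·Y² | G] = w·(σ² + μ²). Then E[ (1_A·(Y − μ̂)/w)² | G ] = (σ² + (μ − μ̂)²)/w almost surely. -/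
open MeasureTheory

/-!
Expanding the square and pulling out the `m`-measurable `ν` gives
`E[D(Y − ν)² | m] = E[DY² | m] − 2ν E[DY | m] + ν² E[D | m]`. For `D = 1_A` the three moments are
`w(σ² + μ²)`, `wμ` and `w`, so the right-hand side is `w(σ² + (μ − ν)²)`; since `1_A² = 1_A`,
pulling out `1 / w²` turns this into `(σ² + (μ − ν)²) / w`.

Every term is integrable as soon as `(1_A(Y − ν) / w)²` is: since `w = P(A | m) ≤ 1`, also
`1_A(Y − ν)²` is integrable, hence `1_A ν²` by `ν² ≤ 2Y² + 2(Y − ν)²`, hence the cross term.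
-/

section QuadraticExpansion

variable {Ω : Type*} {m m0 : MeasurableSpace Ω} {P : Measure Ω} {D Y ν : Ω → ℝ}

lemma integrable_mul_mul_of_integrable_mul_sq (hν : AEStronglyMeasurable ν P)
    (hDY : Integrable (fun ω => D ω * Y ω) P) (hDY2 : Integrable (fun ω => D ω * Y ω ^ 2) P)
    (hDν2 : Integrable (fun ω => ν ω ^ 2 * D ω) P) :
    Integrable (fun ω => ν ω * (D ω * Y ω)) P := by
  refine (hDY2.abs.add hDν2.abs).mono' (hν.mul hDY.aestronglyMeasurable) (.of_forall fun ω => ?_)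
  have amgm : |ν ω| * |Y ω| ≤ Y ω ^ 2 + ν ω ^ 2 := by
    nlinarith [sq_nonneg (|ν ω| - |Y ω|), sq_nonneg (|ν ω| + |Y ω|), sq_abs (ν ω), sq_abs (Y ω)]
  calc ‖ν ω * (D ω * Y ω)‖ = |D ω| * (|ν ω| * |Y ω|) := by
        rw [Real.norm_eq_abs, abs_mul, abs_mul]; ring
    _ ≤ |D ω| * (Y ω ^ 2 + ν ω ^ 2) := by gcongr
    _ = |D ω * Y ω ^ 2| + |ν ω ^ 2 * D ω| := by
        rw [abs_mul, abs_mul, abs_sq, abs_sq]; ring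

lemma mul_sub_sq_eq_expansion : (fun ω => D ω * (Y ω - ν ω) ^ 2) =
    (fun ω => D ω * Y ω ^ 2) - (2 : ℝ) • (fun ω => ν ω * (D ω * Y ω))
      + fun ω => ν ω ^ 2 * D ω := by
  ext ω
  simp only [Pi.add_apply, Pi.sub_apply, Pi.smul_apply, smul_eq_mul]
  ring

lemma integrable_mul_sub_sq (hν : AEStronglyMeasurable ν P)
    (hDY : Integrable (fun ω => D ω * Y ω) P) (hDY2 : Integrable (fun ω => D ω * Y ω ^ 2) P)
    (hDν2 : Integrable (fun ω => ν ω ^ 2 * D ω) P) :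
    Integrable (fun ω => D ω * (Y ω - ν ω) ^ 2) P := by
  rw [mul_sub_sq_eq_expansion]
  exact (hDY2.sub ((integrable_mul_mul_of_integrable_mul_sq hν hDY hDY2 hDν2).smul 2)).add hDν2

lemma integrable_sq_mul_of_integrable_mul_sub_sq (hν : AEStronglyMeasurable ν P)
    (hD : AEStronglyMeasurable D P) (hDY2 : Integrable (fun ω => D ω * Y ω ^ 2) P)
    (hDYν : Integrable (fun ω => D ω * (Y ω - ν ω) ^ 2) P) :
    Integrable (fun ω => ν ω ^ 2 * D ω) P := by
  refine ((hDY2.abs.add hDYν.abs).const_mul 2).mono' ((hν.pow 2).mul hD) (.of_forall fun ω => ?_)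
  have parallelogram : ν ω ^ 2 ≤ 2 * (Y ω ^ 2 + (Y ω - ν ω) ^ 2) := by
    nlinarith [sq_nonneg (2 * Y ω - ν ω)]
  calc ‖ν ω ^ 2 * D ω‖ = ν ω ^ 2 * |D ω| := by rw [Real.norm_eq_abs, abs_mul, abs_sq]
    _ ≤ 2 * (Y ω ^ 2 + (Y ω - ν ω) ^ 2) * |D ω| := by gcongr
    _ = 2 * (|D ω * Y ω ^ 2| + |D ω * (Y ω - ν ω) ^ 2|) := by
        rw [abs_mul, abs_mul, abs_sq, abs_sq]; ring

lemma condExp_mul_sub_sq (hm : m ≤ m0) (hν : AEStronglyMeasurable[m] ν P)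
    (hD : Integrable D P) (hDY : Integrable (fun ω => D ω * Y ω) P)
    (hDY2 : Integrable (fun ω => D ω * Y ω ^ 2) P)
    (hDν2 : Integrable (fun ω => ν ω ^ 2 * D ω) P) :
    P[fun ω => D ω * (Y ω - ν ω) ^ 2 | m] =ᵐ[P] fun ω =>
      P[fun ω => D ω * Y ω ^ 2 | m] ω - 2 * (ν ω * P[fun ω => D ω * Y ω | m] ω)
        + ν ω ^ 2 * P[D | m] ω := by
  have hcross := integrable_mul_mul_of_integrable_mul_sq (hν.mono hm) hDY hDY2 hDν2
  rw [mul_sub_sq_eq_expansion]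
  filter_upwards [condExp_add (hDY2.sub (hcross.smul (2 : ℝ))) hDν2 m,
    condExp_sub hDY2 (hcross.smul (2 : ℝ)) m,
    condExp_smul (μ := P) (2 : ℝ) (fun ω => ν ω * (D ω * Y ω)) m,
    condExp_mul_of_aestronglyMeasurable_left hν hcross hDY,
    condExp_mul_of_aestronglyMeasurable_left (hν.pow 2) hDν2 hD]
    with ω hadd hsub hsmul hpullν hpullν2
  rw [hadd, Pi.add_apply, hsub, Pi.sub_apply, hsmul, Pi.smul_apply, smul_eq_mul]
  exact congrArg₂ (fun a b => _ - 2 * a + b) hpullν hpullν2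

end QuadraticExpansion

section InverseProbabilityWeighting

variable {Ω : Type*} {m m0 : MeasurableSpace Ω} {P : Measure Ω} {A : Set Ω} {Y Z w ν : Ω → ℝ}

lemma ae_abs_condExp_indicator_one_le_one :
    ∀ᵐ ω ∂P, |P[A.indicator (fun _ => (1 : ℝ)) | m] ω| ≤ 1 := by
  refine ae_bdd_abs_condExp_of_ae_bdd_abs (.of_forall fun ω => ?_)
  by_cases h : ω ∈ A <;> simp [h]

lemma sq_indicator_mul_div (a b : ℝ) (ω : Ω) :
    (A.indicator (fun _ => (1 : ℝ)) ω * a / b) ^ 2 =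
      b⁻¹ ^ 2 * (A.indicator (fun _ => (1 : ℝ)) ω * a ^ 2) := by
  by_cases h : ω ∈ A <;> simp [h, div_eq_inv_mul, mul_pow]

lemma integrable_sq_mul_of_ae_abs_le {f g : Ω → ℝ} (hg : Integrable g P)
    (hf : AEStronglyMeasurable f P) {C : ℝ} (hfC : ∀ᵐ ω ∂P, |f ω| ≤ C) :
    Integrable (fun ω => f ω ^ 2 * g ω) P := by
  refine hg.bdd_mul (c := C ^ 2) (hf.pow 2) (hfC.mono fun ω h => ?_)
  simpa only [Pi.pow_apply, norm_pow] using pow_le_pow_left₀ (norm_nonneg (f ω)) h 2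

lemma integrable_indicator_mul_sq_of_sq_div (hw : AEStronglyMeasurable w P)
    (hw0 : ∀ᵐ ω ∂P, w ω ≠ 0) {C : ℝ} (hwC : ∀ᵐ ω ∂P, |w ω| ≤ C)
    (hint : Integrable (fun ω => (A.indicator (fun _ => (1 : ℝ)) ω * Z ω / w ω) ^ 2) P) :
    Integrable (fun ω => A.indicator (fun _ => (1 : ℝ)) ω * Z ω ^ 2) P := by
  refine (integrable_sq_mul_of_ae_abs_le hint hw hwC).congr ?_
  filter_upwards [hw0] with ω h
  rw [sq_indicator_mul_div, ← mul_assoc, ← mul_pow, mul_inv_cancel₀ h, one_pow, one_mul]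

lemma integrable_sq_indicator_mul_sub_div [IsFiniteMeasure P] (hA : MeasurableSet A)
    (hAY : Integrable (fun ω => A.indicator (fun _ => (1 : ℝ)) ω * Y ω) P)
    (hAY2 : Integrable (fun ω => A.indicator (fun _ => (1 : ℝ)) ω * Y ω ^ 2) P)
    (hw : AEStronglyMeasurable w P) {δ : ℝ} (hδ : 0 < δ) (hwδ : ∀ᵐ ω ∂P, δ ≤ w ω)
    (hν : AEStronglyMeasurable ν P) {C : ℝ} (hνC : ∀ᵐ ω ∂P, |ν ω| ≤ C) :
    Integrable (fun ω => (A.indicator (fun _ => (1 : ℝ)) ω * (Y ω - ν ω) / w ω) ^ 2) P := by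
  have hAν2 : Integrable (fun ω => ν ω ^ 2 * A.indicator (fun _ => (1 : ℝ)) ω) P :=
    integrable_sq_mul_of_ae_abs_le ((integrable_const 1).indicator hA) hν hνC
  have hw_inv : ∀ᵐ ω ∂P, |(w ω)⁻¹| ≤ δ⁻¹ := by
    filter_upwards [hwδ] with ω h
    rw [abs_of_pos (inv_pos.2 (hδ.trans_le h))]
    gcongr
  simp_rw [sq_indicator_mul_div]
  exact integrable_sq_mul_of_ae_abs_le (integrable_mul_sub_sq hν hAY hAY2 hAν2) hw.inv₀ hw_inv

end InverseProbabilityWeighting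

theorem stmt15_general {Ω : Type*} {m m0 : MeasurableSpace Ω} (hm : m ≤ m0)
    (P : Measure Ω) [IsFiniteMeasure P]
    (A : Set Ω) (hA : MeasurableSet[m0] A)
    (Y : Ω → ℝ)
    (hAYint : Integrable (fun ω => A.indicator (fun _ => (1 : ℝ)) ω * Y ω) P)
    (hAY2int : Integrable (fun ω => A.indicator (fun _ => (1 : ℝ)) ω * (Y ω) ^ 2) P)
    (w : Ω → ℝ) (hw0 : ∀ᵐ ω ∂P, w ω ≠ 0)
    (μhat : Ω → ℝ) (hμhat : AEStronglyMeasurable[m] μhat P)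
    (hint : Integrable
      (fun ω => (A.indicator (fun _ => (1 : ℝ)) ω * (Y ω - μhat ω) / w ω) ^ 2) P)
    (μc σc : Ω → ℝ)
    (hcond1 : P[A.indicator (fun _ => (1 : ℝ)) | m] =ᵐ[P] w)
    (hcond2 : P[fun ω => A.indicator (fun _ => (1 : ℝ)) ω * Y ω | m]
      =ᵐ[P] fun ω => w ω * μc ω)
    (hcond3 : P[fun ω => A.indicator (fun _ => (1 : ℝ)) ω * (Y ω) ^ 2 | m]
      =ᵐ[P] fun ω => w ω * (σc ω ^ 2 + μc ω ^ 2)) :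
    P[fun ω => (A.indicator (fun _ => (1 : ℝ)) ω * (Y ω - μhat ω) / w ω) ^ 2 | m]
      =ᵐ[P] fun ω => (σc ω ^ 2 + (μc ω - μhat ω) ^ 2) / w ω := by
  have hA1 : Integrable (A.indicator fun _ => (1 : ℝ)) P := (integrable_const 1).indicator hA
  have hw : AEStronglyMeasurable[m] w P :=
    stronglyMeasurable_condExp.aestronglyMeasurable.congr hcond1
  have hw1 : ∀ᵐ ω ∂P, |w ω| ≤ 1 := by
    filter_upwards [ae_abs_condExp_indicator_one_le_one, hcond1] with ω h hcond
    rwa [← hcond]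
  have hsq := integrable_indicator_mul_sq_of_sq_div (hw.mono hm) hw0 hw1 hint
  have hAμ2 := integrable_sq_mul_of_integrable_mul_sub_sq (hμhat.mono hm)
    hA1.aestronglyMeasurable hAY2int hsq
  simp_rw [sq_indicator_mul_div] at hint ⊢
  filter_upwards [condExp_mul_of_aestronglyMeasurable_left (hw.inv₀.pow 2) hint hsq,
    condExp_mul_sub_sq hm hμhat hA1 hAYint hAY2int hAμ2, hcond1, hcond2, hcond3, hw0]
    with ω hpull hexpand h1 h2 h3 hne
  refine hpull.trans ?_
  rw [Pi.mul_apply, hexpand, h1, h2, h3, Pi.pow_apply, Pi.inv_apply]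
  field_simp
  ring

/-- Conditional second-moment of the IPW term: under
`E[1_A | G] = w`, `E[1_A·Y | G] = w·μ`, `E[1_A·Y² | G] = w(σ² + μ²)` a.s.,
one has `E[(1_A (Y − μ̂)/w)² | G] = (σ² + (μ − μ̂)²)/w` a.s. -/
theorem stmt15 {Ω : Type*} {m m0 : MeasurableSpace Ω} (hm : m ≤ m0)
    (P : Measure Ω) [IsProbabilityMeasure P]
    (A : Set Ω) (hA : MeasurableSet[m0] A)
    (Y : Ω → ℝ)
    (hAYint : Integrable (fun ω => A.indicator (fun _ => (1 : ℝ)) ω * Y ω) P)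
    (hAY2int : Integrable (fun ω => A.indicator (fun _ => (1 : ℝ)) ω * (Y ω) ^ 2) P)
    (w : Ω → ℝ) (hw : Measurable[m] w)
    (δ : ℝ) (hδ : 0 < δ) (hwδ : ∀ᵐ ω ∂P, δ ≤ w ω)
    (μhat : Ω → ℝ) (hμhat : Measurable[m] μhat)
    (Cμ : ℝ) (hμhatbdd : ∀ ω, |μhat ω| ≤ Cμ)
    (μc σc : ℝ)
    (hcond1 : P[A.indicator (fun _ => (1 : ℝ)) | m] =ᵐ[P] w)
    (hcond2 : P[fun ω => A.indicator (fun _ => (1 : ℝ)) ω * Y ω | m]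
      =ᵐ[P] fun ω => w ω * μc)
    (hcond3 : P[fun ω => A.indicator (fun _ => (1 : ℝ)) ω * (Y ω) ^ 2 | m]
      =ᵐ[P] fun ω => w ω * (σc ^ 2 + μc ^ 2)) :
    P[fun ω => (A.indicator (fun _ => (1 : ℝ)) ω * (Y ω - μhat ω) / w ω) ^ 2 | m]
      =ᵐ[P] fun ω => (σc ^ 2 + (μc - μhat ω) ^ 2) / w ω := by
  have hint := integrable_sq_indicator_mul_sub_div hA hAYint hAY2int
    (hw.aestronglyMeasurable.mono hm) hδ hwδ (hμhat.aestronglyMeasurable.mono hm)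
    (.of_forall hμhatbdd)
  exact stmt15_general hm P A hA Y hAYint hAY2int w (hwδ.mono fun _ h => (hδ.trans_le h).ne')
    μhat hμhat.aestronglyMeasurable hint (fun _ => μc) (fun _ => σc) hcond1 hcond2 hcond3
end

section
/- Let (Ω, F, P) be a probability space, G ⊆ F a sub-σ-algebra, and A₁, A₂ ∈ F disjoint events. For i = 1, 2 let Y_i : Ω → ℝ be random variables with 1_{A_i}·Y_i and 1_{A_i}·Y_i² integrable, let w_i be G-measurable random variables with w_i ≥ δ almost surely for some constant δ > 0, let μ̂_i be bounded G-measurable random variables, and let μ_i, σ_i ∈ ℝ be constants. Assume that almost surely, for i = 1, 2: E[1_{A_i} | G] = w_i, E[1_{A_i}·Y_i | G] = w_i·μ_i, and E[1_{A_i}·Y_i² | G] = w_i·(σ_i² + μ_i²). Set Δ = μ₁ − μ₂ and ψ_i = 1_{A_i}·(Y_i − μ̂_i)/w_i + μ̂_i. Then almost surely E[ (ψ₁ − ψ₂ − Δ)² | G ] = (σ₁² + (μ₁ − μ̂₁)²)/w₁ + (σ₂² + (μ₂ − μ̂₂)²)/w₂ − ((μ̂₁ − μ̂₂) − Δ)².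 -/
open MeasureTheory

/-!
Put `U = 1_{A₁} (Y₁ - μ̂₁) / w₁ - 1_{A₂} (Y₂ - μ̂₂) / w₂`. Its conditional mean is
`(μ₁ - μ̂₁) - (μ₂ - μ̂₂)`, so `ψ₁ - ψ₂ - Δ = U - E[U | G]` and the claim computes the conditional
variance of `U`, namely `E[U² | G] - E[U | G]²`. As the arms are disjoint, the cross term of `U²`
vanishes. Subtracting a `G`-measurable estimate from the reward of an arm only shifts its
conditional mean, so each remaining square is that of an inverse-probability-weighted reward.
-/

section AIPW

open ProbabilityTheory Filter

variable {Ω : Type*} {m m0 : MeasurableSpace Ω} {P : Measure Ω} {A A₁ A₂ : Set Ω}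
  {Y Y₁ Y₂ w w₁ w₂ μ μ₁ μ₂ σ σ₁ σ₂ a μhat₁ μhat₂ : Ω → ℝ}

/-- An arm `A` with reward `Y` under the information `m`: its allocation probability is `w`, and,
given that `A` is allocated, `Y` has mean `μ` and standard deviation `σ`. The reward is constrained
only on `A`, and `μ`, `σ` may vary with the information. -/
structure HasArmMoments (m : MeasurableSpace Ω) {m0 : MeasurableSpace Ω} (P : Measure Ω)
    (A : Set Ω) (Y w μ σ : Ω → ℝ) : Prop where
  measurableSet : MeasurableSet[m0] A
  integrable_mul : Integrable (fun ω => A.indicator (fun _ => (1 : ℝ)) ω * Y ω) P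
  integrable_mul_sq : Integrable (fun ω => A.indicator (fun _ => (1 : ℝ)) ω * Y ω ^ 2) P
  condExp_indicator : P[A.indicator (fun _ => (1 : ℝ)) | m] =ᵐ[P] w
  condExp_mul : P[fun ω => A.indicator (fun _ => (1 : ℝ)) ω * Y ω | m] =ᵐ[P] fun ω => w ω * μ ω
  condExp_mul_sq : P[fun ω => A.indicator (fun _ => (1 : ℝ)) ω * Y ω ^ 2 | m]
    =ᵐ[P] fun ω => w ω * (σ ω ^ 2 + μ ω ^ 2)

/-- The inverse-probability-weighted reward `1_A Y / w` of the arm `A`. -/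
noncomputable def ipw (A : Set Ω) (w Y : Ω → ℝ) (ω : Ω) : ℝ :=
  A.indicator (fun _ => (1 : ℝ)) ω * Y ω / w ω

/-- The augmented inverse-probability-weighted summand `ψ = 1_A (Y - μ̂) / w + μ̂`, which replaces
the reward by its deviation from the plug-in estimate `μ̂`. -/
noncomputable def aipw (A : Set Ω) (w Y μhat : Ω → ℝ) (ω : Ω) : ℝ :=
  ipw A w (fun ω => Y ω - μhat ω) ω + μhat ω

theorem indicator_one_mul_sq (A : Set Ω) (Y : Ω → ℝ) (ω : Ω) :
    (A.indicator (fun _ => (1 : ℝ)) ω * Y ω) ^ 2 = A.indicator (fun _ => (1 : ℝ)) ω * Y ω ^ 2 := by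
  by_cases hω : ω ∈ A <;> simp [hω]

theorem ipw_sq (A : Set Ω) (w Y : Ω → ℝ) (ω : Ω) :
    ipw A w Y ω ^ 2 = (w ω ^ 2)⁻¹ * (A.indicator (fun _ => (1 : ℝ)) ω * Y ω ^ 2) := by
  rw [ipw, div_pow, indicator_one_mul_sq, div_eq_inv_mul]

theorem ipw_mul_ipw_of_disjoint (hA : Disjoint A₁ A₂) (ω : Ω) :
    ipw A₁ w₁ Y₁ ω * ipw A₂ w₂ Y₂ ω = 0 := by
  by_cases hω : ω ∈ A₁
  · simp [ipw, Set.disjoint_left.mp hA hω]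
  · simp [ipw, hω]

theorem condExp_mul_ae_eq_mul {X g : Ω → ℝ} (ha : AEStronglyMeasurable[m] a P)
    (hX : Integrable X P) (haX : Integrable (fun ω => a ω * X ω) P) (hg : P[X | m] =ᵐ[P] g) :
    P[fun ω => a ω * X ω | m] =ᵐ[P] fun ω => a ω * g ω :=
  (condExp_mul_of_aestronglyMeasurable_left ha haX hX).trans (EventuallyEq.rfl.mul hg)

namespace HasArmMoments

theorem integrable_indicator [IsFiniteMeasure P] (h : HasArmMoments m P A Y w μ σ) :
    Integrable (A.indicator fun _ => (1 : ℝ)) P :=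
  (integrable_const 1).indicator h.measurableSet

theorem memLp_mul (h : HasArmMoments m P A Y w μ σ) :
    MemLp (fun ω => A.indicator (fun _ => (1 : ℝ)) ω * Y ω) 2 P := by
  rw [memLp_two_iff_integrable_sq h.integrable_mul.aestronglyMeasurable]
  simpa only [indicator_one_mul_sq] using h.integrable_mul_sq

theorem aestronglyMeasurable_weight (h : HasArmMoments m P A Y w μ σ) :
    AEStronglyMeasurable[m] w P :=
  stronglyMeasurable_condExp.aestronglyMeasurable.congr h.condExp_indicator

theorem abs_weight_le_one (h : HasArmMoments m P A Y w μ σ) : ∀ᵐ ω ∂P, |w ω| ≤ 1 := by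
  have indicator_le : ∀ᵐ ω ∂P, |A.indicator (fun _ => (1 : ℝ)) ω| ≤ 1 :=
    .of_forall fun ω => by by_cases hω : ω ∈ A <;> simp [hω]
  filter_upwards [ae_bdd_abs_condExp_of_ae_bdd_abs (m := m) indicator_le, h.condExp_indicator]
    with ω hle hw
  rwa [hw] at hle

theorem sub [IsFiniteMeasure P] (h : HasArmMoments m P A Y w μ σ)
    (ha : AEStronglyMeasurable[m] a P)
    (ha₂ : MemLp (fun ω => A.indicator (fun _ => (1 : ℝ)) ω * a ω) 2 P) :
    HasArmMoments m P A (fun ω => Y ω - a ω) w (fun ω => μ ω - a ω) σ := by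
  set I : Ω → ℝ := A.indicator fun _ => 1 with hI
  have expand : (fun ω => I ω * (Y ω - a ω)) = fun ω => I ω * Y ω - a ω * I ω := by
    funext ω; ring
  have expand_sq : (fun ω => I ω * (Y ω - a ω) ^ 2)
      = fun ω => I ω * Y ω ^ 2 - 2 * a ω * (I ω * Y ω) + a ω ^ 2 * I ω := by
    funext ω; ring
  have int_aI : Integrable (fun ω => a ω * I ω) P := by
    simpa only [mul_comm] using ha₂.integrable one_le_two
  have int_aIY : Integrable (fun ω => 2 * a ω * (I ω * Y ω)) P := by
    refine ((ha₂.integrable_mul h.memLp_mul).const_mul 2).congr (.of_forall fun ω => ?_)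
    by_cases hω : ω ∈ A <;> simp [hI, hω, mul_assoc]
  have int_asqI : Integrable (fun ω => a ω ^ 2 * I ω) P := by
    simpa only [hI, indicator_one_mul_sq, mul_comm (a _ ^ 2)] using ha₂.integrable_sq
  have cond_aI := condExp_mul_ae_eq_mul ha h.integrable_indicator int_aI h.condExp_indicator
  have cond_aIY := condExp_mul_ae_eq_mul (ha.const_mul 2) h.integrable_mul int_aIY h.condExp_mul
  have cond_asqI := condExp_mul_ae_eq_mul (a := fun ω => a ω ^ 2) (ha.pow 2)
    h.integrable_indicator int_asqI h.condExp_indicator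
  refine ⟨h.measurableSet, ?_, ?_, h.condExp_indicator, ?_, ?_⟩
  · exact expand ▸ h.integrable_mul.sub int_aI
  · exact expand_sq ▸ (h.integrable_mul_sq.sub int_aIY).add int_asqI
  · rw [expand]
    filter_upwards [condExp_sub h.integrable_mul int_aI m, h.condExp_mul, cond_aI]
      with ω hsub hY haI
    refine hsub.trans ?_
    rw [Pi.sub_apply, hY, haI]
    ring
  · rw [expand_sq]
    filter_upwards [condExp_add (h.integrable_mul_sq.sub int_aIY) int_asqI m,
      condExp_sub h.integrable_mul_sq int_aIY m, h.condExp_mul_sq, cond_aIY, cond_asqI]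
      with ω hadd hsub hYsq haIY hasqI
    refine hadd.trans ?_
    rw [Pi.add_apply, hsub, Pi.sub_apply, hYsq, haIY, hasqI]
    ring

theorem condExp_ipw (h : HasArmMoments m P A Y w μ σ) (hw : ∀ᵐ ω ∂P, w ω ≠ 0)
    (hint : Integrable (ipw A w Y) P) : P[ipw A w Y | m] =ᵐ[P] μ := by
  have pull_form : ipw A w Y = fun ω => (w ω)⁻¹ * (A.indicator (fun _ => (1 : ℝ)) ω * Y ω) :=
    funext fun ω => div_eq_inv_mul _ _
  rw [pull_form] at hint ⊢
  filter_upwards [condExp_mul_ae_eq_mul (a := fun ω => (w ω)⁻¹)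
    h.aestronglyMeasurable_weight.inv₀ h.integrable_mul hint h.condExp_mul, hw] with ω hω hw
  rw [hω, inv_mul_cancel_left₀ hw]

theorem condExp_ipw_sq (h : HasArmMoments m P A Y w μ σ) (hw : ∀ᵐ ω ∂P, w ω ≠ 0)
    (hint : Integrable (fun ω => ipw A w Y ω ^ 2) P) :
    P[fun ω => ipw A w Y ω ^ 2 | m] =ᵐ[P] fun ω => (σ ω ^ 2 + μ ω ^ 2) / w ω := by
  simp only [ipw_sq] at hint ⊢
  filter_upwards [condExp_mul_ae_eq_mul (a := fun ω => (w ω ^ 2)⁻¹)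
    (h.aestronglyMeasurable_weight.pow 2).inv₀ h.integrable_mul_sq hint
    h.condExp_mul_sq, hw] with ω hω hw
  rw [hω]
  field_simp

theorem memLp_mul_of_memLp_ipw_sub (h : HasArmMoments m P A Y w μ σ) (hm : m ≤ m0)
    (hw : ∀ᵐ ω ∂P, w ω ≠ 0) (hipw : MemLp (ipw A w fun ω => Y ω - a ω) 2 P) :
    MemLp (fun ω => A.indicator (fun _ => (1 : ℝ)) ω * a ω) 2 P := by
  have weight_top : MemLp w ⊤ P :=
    memLp_top_of_bound (h.aestronglyMeasurable_weight.mono hm) 1 h.abs_weight_le_one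
  refine (memLp_congr_ae ?_).mp (h.memLp_mul.sub (hipw.mul weight_top))
  filter_upwards [hw] with ω hw
  simp only [Pi.sub_apply, Pi.mul_apply, ipw]
  field_simp
  ring

theorem memLp_ipw_sub [IsFiniteMeasure P] (h : HasArmMoments m P A Y w μ σ) (hm : m ≤ m0)
    {δ C : ℝ} (hδ : 0 < δ) (hw : ∀ᵐ ω ∂P, δ ≤ w ω) (ha : AEStronglyMeasurable[m] a P)
    (haC : ∀ᵐ ω ∂P, |a ω| ≤ C) : MemLp (ipw A w fun ω => Y ω - a ω) 2 P := by
  have indicator_mem : MemLp (A.indicator fun _ => (1 : ℝ)) 2 P :=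
    (memLp_const 1).indicator h.measurableSet
  have estimate_top : MemLp a ⊤ P := memLp_top_of_bound (ha.mono hm) C haC
  have inv_weight_top : MemLp (fun ω => (w ω)⁻¹) ⊤ P := by
    refine memLp_top_of_bound (h.aestronglyMeasurable_weight.mono hm).inv₀ δ⁻¹ ?_
    filter_upwards [hw] with ω hw
    rw [norm_inv, Real.norm_of_nonneg (hδ.le.trans hw)]
    exact inv_anti₀ hδ hw
  refine (memLp_congr_ae (.of_forall fun ω => ?_)).mp
    ((h.memLp_mul.sub (indicator_mem.mul estimate_top)).mul inv_weight_top)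
  simp only [Pi.sub_apply, Pi.mul_apply, ipw]
  ring

end HasArmMoments

theorem condExp_ipw_sub_ipw
    (h₁ : HasArmMoments m P A₁ Y₁ w₁ μ₁ σ₁) (h₂ : HasArmMoments m P A₂ Y₂ w₂ μ₂ σ₂)
    (hw₁ : ∀ᵐ ω ∂P, w₁ ω ≠ 0) (hw₂ : ∀ᵐ ω ∂P, w₂ ω ≠ 0)
    (hint₁ : Integrable (ipw A₁ w₁ Y₁) P) (hint₂ : Integrable (ipw A₂ w₂ Y₂) P) :
    P[ipw A₁ w₁ Y₁ - ipw A₂ w₂ Y₂ | m] =ᵐ[P] μ₁ - μ₂ :=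
  (condExp_sub hint₁ hint₂ m).trans ((h₁.condExp_ipw hw₁ hint₁).sub (h₂.condExp_ipw hw₂ hint₂))

theorem condVar_ipw_sub_ipw [IsFiniteMeasure P] (hm : m ≤ m0) (hA : Disjoint A₁ A₂)
    (h₁ : HasArmMoments m P A₁ Y₁ w₁ μ₁ σ₁) (h₂ : HasArmMoments m P A₂ Y₂ w₂ μ₂ σ₂)
    (hw₁ : ∀ᵐ ω ∂P, w₁ ω ≠ 0) (hw₂ : ∀ᵐ ω ∂P, w₂ ω ≠ 0)
    (hipw₁ : MemLp (ipw A₁ w₁ Y₁) 2 P) (hipw₂ : MemLp (ipw A₂ w₂ Y₂) 2 P) :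
    Var[ipw A₁ w₁ Y₁ - ipw A₂ w₂ Y₂; P | m] =ᵐ[P] fun ω =>
      (σ₁ ω ^ 2 + μ₁ ω ^ 2) / w₁ ω + (σ₂ ω ^ 2 + μ₂ ω ^ 2) / w₂ ω - (μ₁ ω - μ₂ ω) ^ 2 := by
  have sq_sub : (ipw A₁ w₁ Y₁ - ipw A₂ w₂ Y₂) ^ 2
      = (fun ω => ipw A₁ w₁ Y₁ ω ^ 2) + fun ω => ipw A₂ w₂ Y₂ ω ^ 2 := by
    funext ω
    simp only [Pi.pow_apply, Pi.sub_apply, Pi.add_apply]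
    linear_combination (-2) * ipw_mul_ipw_of_disjoint (w₁ := w₁) (w₂ := w₂) (Y₁ := Y₁) (Y₂ := Y₂)
      hA ω
  have sq_mean := condExp_add hipw₁.integrable_sq hipw₂.integrable_sq m
  rw [← sq_sub] at sq_mean
  filter_upwards [condVar_ae_eq_condExp_sq_sub_sq_condExp hm (hipw₁.sub hipw₂), sq_mean,
    h₁.condExp_ipw_sq hw₁ hipw₁.integrable_sq, h₂.condExp_ipw_sq hw₂ hipw₂.integrable_sq,
    condExp_ipw_sub_ipw h₁ h₂ hw₁ hw₂ (hipw₁.integrable one_le_two)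
      (hipw₂.integrable one_le_two)] with ω hvar hsq hsq₁ hsq₂ hmean
  rw [hvar, Pi.sub_apply, Pi.pow_apply, hsq, Pi.add_apply, hsq₁, hsq₂, hmean, Pi.sub_apply]

theorem stmt16_general [IsFiniteMeasure P] (hm : m ≤ m0) (hA : Disjoint A₁ A₂)
    (h₁ : HasArmMoments m P A₁ Y₁ w₁ μ₁ σ₁) (h₂ : HasArmMoments m P A₂ Y₂ w₂ μ₂ σ₂)
    (hw₁ : ∀ᵐ ω ∂P, w₁ ω ≠ 0) (hw₂ : ∀ᵐ ω ∂P, w₂ ω ≠ 0)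
    (hμhat₁ : AEStronglyMeasurable[m] μhat₁ P) (hμhat₂ : AEStronglyMeasurable[m] μhat₂ P)
    (hipw₁ : MemLp (ipw A₁ w₁ fun ω => Y₁ ω - μhat₁ ω) 2 P)
    (hipw₂ : MemLp (ipw A₂ w₂ fun ω => Y₂ ω - μhat₂ ω) 2 P) :
    P[fun ω => (aipw A₁ w₁ Y₁ μhat₁ ω - aipw A₂ w₂ Y₂ μhat₂ ω - (μ₁ ω - μ₂ ω)) ^ 2 | m]
      =ᵐ[P] fun ω =>
        (σ₁ ω ^ 2 + (μ₁ ω - μhat₁ ω) ^ 2) / w₁ ω + (σ₂ ω ^ 2 + (μ₂ ω - μhat₂ ω) ^ 2) / w₂ ω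
          - ((μhat₁ ω - μhat₂ ω) - (μ₁ ω - μ₂ ω)) ^ 2 := by
  have residual₁ := h₁.sub hμhat₁ (h₁.memLp_mul_of_memLp_ipw_sub hm hw₁ hipw₁)
  have residual₂ := h₂.sub hμhat₂ (h₂.memLp_mul_of_memLp_ipw_sub hm hw₂ hipw₂)
  set U : Ω → ℝ :=
    ipw A₁ w₁ (fun ω => Y₁ ω - μhat₁ ω) - ipw A₂ w₂ (fun ω => Y₂ ω - μhat₂ ω) with hU
  have mean : P[U | m] =ᵐ[P] (fun ω => μ₁ ω - μhat₁ ω) - fun ω => μ₂ ω - μhat₂ ω :=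
    condExp_ipw_sub_ipw residual₁ residual₂ hw₁ hw₂ (hipw₁.integrable one_le_two)
      (hipw₂.integrable one_le_two)
  have centred : (fun ω => (aipw A₁ w₁ Y₁ μhat₁ ω - aipw A₂ w₂ Y₂ μhat₂ ω - (μ₁ ω - μ₂ ω)) ^ 2)
      =ᵐ[P] (U - P[U | m]) ^ 2 := by
    filter_upwards [mean] with ω hmean
    rw [Pi.pow_apply, Pi.sub_apply, hmean]
    simp only [aipw, hU, Pi.sub_apply]
    ring
  filter_upwards [condExp_congr_ae (m := m) centred,
    condVar_ipw_sub_ipw hm hA residual₁ residual₂ hw₁ hw₂ hipw₁ hipw₂] with ω hcentred hvar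
  rw [hcentred, ← condVar, hvar]
  ring

end AIPW

/-- Conditional variance identity for the difference of A2IPW summands of two
disjoint arms: with `ψ_i = 1_{A_i}(Y_i − μ̂_i)/w_i + μ̂_i` and `Δ = μ₁ − μ₂`,
`E[(ψ₁ − ψ₂ − Δ)² | G] = (σ₁² + (μ₁ − μ̂₁)²)/w₁ + (σ₂² + (μ₂ − μ̂₂)²)/w₂ − ((μ̂₁ − μ̂₂) − Δ)²`
almost surely. -/
theorem stmt16 {Ω : Type*} {m m0 : MeasurableSpace Ω} (hm : m ≤ m0)
    (P : Measure Ω) [IsProbabilityMeasure P]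
    (A₁ A₂ : Set Ω) (hA₁ : MeasurableSet[m0] A₁) (hA₂ : MeasurableSet[m0] A₂)
    (hdisj : Disjoint A₁ A₂)
    (Y₁ Y₂ : Ω → ℝ)
    (hAY1 : Integrable (fun ω => A₁.indicator (fun _ => (1 : ℝ)) ω * Y₁ ω) P)
    (hAY1sq : Integrable (fun ω => A₁.indicator (fun _ => (1 : ℝ)) ω * (Y₁ ω) ^ 2) P)
    (hAY2 : Integrable (fun ω => A₂.indicator (fun _ => (1 : ℝ)) ω * Y₂ ω) P)
    (hAY2sq : Integrable (fun ω => A₂.indicator (fun _ => (1 : ℝ)) ω * (Y₂ ω) ^ 2) P)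
    (w₁ w₂ : Ω → ℝ) (hw₁ : Measurable[m] w₁) (hw₂ : Measurable[m] w₂)
    (δ : ℝ) (hδ : 0 < δ) (hw₁δ : ∀ᵐ ω ∂P, δ ≤ w₁ ω) (hw₂δ : ∀ᵐ ω ∂P, δ ≤ w₂ ω)
    (μhat₁ μhat₂ : Ω → ℝ) (hμhat₁ : Measurable[m] μhat₁) (hμhat₂ : Measurable[m] μhat₂)
    (Cμ : ℝ) (hμhat₁bdd : ∀ ω, |μhat₁ ω| ≤ Cμ) (hμhat₂bdd : ∀ ω, |μhat₂ ω| ≤ Cμ)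
    (μ₁ μ₂ σ₁ σ₂ : ℝ)
    (hcond1₁ : P[A₁.indicator (fun _ => (1 : ℝ)) | m] =ᵐ[P] w₁)
    (hcond1₂ : P[A₂.indicator (fun _ => (1 : ℝ)) | m] =ᵐ[P] w₂)
    (hcond2₁ : P[fun ω => A₁.indicator (fun _ => (1 : ℝ)) ω * Y₁ ω | m]
      =ᵐ[P] fun ω => w₁ ω * μ₁)
    (hcond2₂ : P[fun ω => A₂.indicator (fun _ => (1 : ℝ)) ω * Y₂ ω | m]
      =ᵐ[P] fun ω => w₂ ω * μ₂)
    (hcond3₁ : P[fun ω => A₁.indicator (fun _ => (1 : ℝ)) ω * (Y₁ ω) ^ 2 | m]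
      =ᵐ[P] fun ω => w₁ ω * (σ₁ ^ 2 + μ₁ ^ 2))
    (hcond3₂ : P[fun ω => A₂.indicator (fun _ => (1 : ℝ)) ω * (Y₂ ω) ^ 2 | m]
      =ᵐ[P] fun ω => w₂ ω * (σ₂ ^ 2 + μ₂ ^ 2)) :
    P[fun ω =>
        ((A₁.indicator (fun _ => (1 : ℝ)) ω * (Y₁ ω - μhat₁ ω) / w₁ ω + μhat₁ ω)
          - (A₂.indicator (fun _ => (1 : ℝ)) ω * (Y₂ ω - μhat₂ ω) / w₂ ω + μhat₂ ω)
          - (μ₁ - μ₂)) ^ 2 | m]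
      =ᵐ[P] fun ω =>
        (σ₁ ^ 2 + (μ₁ - μhat₁ ω) ^ 2) / w₁ ω + (σ₂ ^ 2 + (μ₂ - μhat₂ ω) ^ 2) / w₂ ω
          - ((μhat₁ ω - μhat₂ ω) - (μ₁ - μ₂)) ^ 2 := by
  have h₁ : HasArmMoments m P A₁ Y₁ w₁ (fun _ => μ₁) (fun _ => σ₁) :=
    ⟨hA₁, hAY1, hAY1sq, hcond1₁, hcond2₁, hcond3₁⟩
  have h₂ : HasArmMoments m P A₂ Y₂ w₂ (fun _ => μ₂) (fun _ => σ₂) :=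
    ⟨hA₂, hAY2, hAY2sq, hcond1₂, hcond2₂, hcond3₂⟩
  have hmeas₁ := hμhat₁.aestronglyMeasurable (μ := P)
  have hmeas₂ := hμhat₂.aestronglyMeasurable (μ := P)
  exact stmt16_general hm hdisj h₁ h₂ (hw₁δ.mono fun _ h => (hδ.trans_le h).ne')
    (hw₂δ.mono fun _ h => (hδ.trans_le h).ne') hmeas₁ hmeas₂
    (h₁.memLp_ipw_sub hm hδ hw₁δ hmeas₁ (.of_forall hμhat₁bdd))
    (h₂.memLp_ipw_sub hm hδ hw₂δ hmeas₂ (.of_forall hμhat₂bdd))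
end
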